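/- Let a ∈ ℝ, let I_f be an interval with least element a, nonempty interior, and I_f ⊂ [a,∞), let Ω ⊂ ℝ^m be a nonempty open set, let α = (α₁,…,α_m) ∈ (0,1]^m, let q_a ∈ Ω, and let f : Ω × I_f → ℝ^m be a Carathéodory function that is bounded on compacts and locally Lipschitz continuous in its first variable: for every (x,t) ∈ Ω × I_f there exist R > 0, δ > 0 and L ≥ 0 such that the closed ball B̄(x,R) ⊂ Ω and |f(x₂,τ) − f(x₁,τ)| ≤ L|x₂ − x₁| for all x₁, x₂ ∈ B̄(x,R) and almost every τ ∈ [t−δ,t+δ] ∩ I_f. Then the Caputo Cauchy problem ( _cD^{α_i}_{a+}[q_i] = f_i(q(·),·) a.e., q(a) = q_a ) has a unique maximal solution (q,I); moreover, every local solution (q',I') of the problem satisfies I' ⊂ I and q = q' on I'. -/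

import Mathlib

open MeasureTheory Set

/-- Left Riemann–Liouville fractional integral of order `α` with base point `a`
(for `α = 0` it is the identity). -/
noncomputable def rlInt (a α : ℝ) (q : ℝ → ℝ) (t : ℝ) : ℝ :=
  if α = 0 then q t else (1 / Real.Gamma α) * ∫ τ in a..t, (t - τ) ^ (α - 1) * q τ

/-- `I` is an interval with least element `a`, nonempty interior, and `I ⊆ [a,∞)`. -/
def IsIntervalFrom (a : ℝ) (I : Set ℝ) : Prop :=
  a ∈ I ∧ I ⊆ Set.Ici a ∧ (interior I).Nonempty ∧ I.OrdConnected

/-- `(q, I)` is a local solution of the Caputo Cauchy problem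
`_cD^{α_i}_{a+}[q_i] = F_i(q(·),·)` a.e., `q(a) = qa`, on the domain `Ω`:
`I ⊆ If` is an interval with least element `a` and nonempty interior, `q` is continuous
on `I` with values in `Ω` and `q(a) = qa`, and for each `i` the function
`I^{1-α_i}_{a+}[q_i - (qa)_i]` agrees a.e. on `I` with a locally absolutely continuous
function `t ↦ c + ∫_a^t h` whose derivative `h` (the Caputo fractional derivative of
`q_i`) equals `F_i(q(t), t)` for almost every `t ∈ I`. -/
def IsCaputoLocalSol (a : ℝ) (If : Set ℝ) {m : ℕ}
    (Ω : Set (EuclideanSpace ℝ (Fin m))) (α : Fin m → ℝ)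
    (qa : EuclideanSpace ℝ (Fin m))
    (F : EuclideanSpace ℝ (Fin m) → ℝ → EuclideanSpace ℝ (Fin m))
    (q : ℝ → EuclideanSpace ℝ (Fin m)) (I : Set ℝ) : Prop :=
  IsIntervalFrom a I ∧ I ⊆ If ∧ ContinuousOn q I ∧ (∀ t ∈ I, q t ∈ Ω) ∧ q a = qa ∧
  ∀ i, ∃ c : ℝ, ∃ h : ℝ → ℝ,
    (∀ b ∈ I, MeasureTheory.IntegrableOn h (Set.Icc a b)) ∧
    (∀ᵐ t ∂(MeasureTheory.volume.restrict I),
      rlInt a (1 - α i) (fun τ => q τ i - qa i) t = c + ∫ τ in a..t, h τ) ∧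
    (∀ᵐ t ∂(MeasureTheory.volume.restrict I), h t = F (q t) t i)

/-- `(q, I)` is a maximal local solution of the Caputo Cauchy problem:
every extension `(q', I')` of it satisfies `I' = I`. -/
def IsMaximalSol (a : ℝ) (If : Set ℝ) {m : ℕ}
    (Ω : Set (EuclideanSpace ℝ (Fin m))) (α : Fin m → ℝ)
    (qa : EuclideanSpace ℝ (Fin m))
    (F : EuclideanSpace ℝ (Fin m) → ℝ → EuclideanSpace ℝ (Fin m))
    (q : ℝ → EuclideanSpace ℝ (Fin m)) (I : Set ℝ) : Prop :=
  IsCaputoLocalSol a If Ω α qa F q I ∧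
  ∀ (q' : ℝ → EuclideanSpace ℝ (Fin m)) (I' : Set ℝ),
    IsCaputoLocalSol a If Ω α qa F q' I' → I ⊆ I' → Set.EqOn q' q I → I' = I

/-!
By the semigroup property of Riemann–Liouville integrals, `q` solves the Caputo Cauchy problem iff
it solves the Volterra equation `q = qa + I^α [F(q(·), ·)]`. The kernel `(t - τ) ^ (α - 1)` is
weakly singular but integrable, with small mass on short intervals. Hence the Picard operator is a
contraction on a short interval, which gives local existence, and two solutions agreeing up to some
time agree a little longer, which gives uniqueness. The maximal solution is the union of all local
solutions.
-/

open Filter Topology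
open scoped ENNReal NNReal

section RiemannLiouville

variable {a b s t α β γ : ℝ} {f h : ℝ → ℝ}

lemma rlInt_of_pos (hα : 0 < α) (h : ℝ → ℝ) (t : ℝ) :
    rlInt a α h t = 1 / Real.Gamma α * ∫ τ in a..t, (t - τ) ^ (α - 1) * h τ :=
  if_neg hα.ne'

lemma rlInt_zero : rlInt a 0 h = h := by
  ext t
  simp [rlInt]

lemma rlInt_one : rlInt a 1 h t = ∫ τ in a..t, h τ := by
  simp [rlInt]

lemma rlInt_self (hα : 0 < α) : rlInt a α h a = 0 := by
  simp [rlInt_of_pos hα]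

lemma rlInt_congr_ae (hα : 0 < α) (hat : a ≤ t) (hfh : f =ᵐ[volume.restrict (Ioc a t)] h) :
    rlInt a α f t = rlInt a α h t := by
  rw [rlInt_of_pos hα, rlInt_of_pos hα]
  congr 1
  refine intervalIntegral.integral_congr_ae_restrict ?_
  rw [uIoc_of_le hat]
  filter_upwards [hfh] with τ hτ
  rw [hτ]

lemma rlInt_congr (hα : 0 ≤ α) (hat : a ≤ t) (hfh : EqOn f h (Icc a t)) :
    rlInt a α f t = rlInt a α h t := by
  rcases hα.eq_or_lt with rfl | hα
  · simpa only [rlInt_zero] using hfh (right_mem_Icc.2 hat)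
  · exact rlInt_congr_ae hα hat <| ae_restrict_of_forall_mem measurableSet_Ioc
      fun τ hτ => hfh (Ioc_subset_Icc_self hτ)

lemma intervalIntegrable_rpow_kernel (hα : 0 < α) (u s t : ℝ) :
    IntervalIntegrable (fun τ => (u - τ) ^ (α - 1)) volume s t := by
  simpa using (intervalIntegral.intervalIntegrable_rpow' (a := u - s) (b := u - t)
    (r := α - 1) (by linarith)).comp_sub_left u

lemma integral_rpow_kernel (hα : 0 < α) (u s t : ℝ) :
    ∫ τ in s..t, (u - τ) ^ (α - 1) = ((u - s) ^ α - (u - t) ^ α) / α := by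
  rw [intervalIntegral.integral_comp_sub_left (fun x => x ^ (α - 1)) u,
    integral_rpow (Or.inl (by linarith)), sub_add_cancel]

lemma intervalIntegrable_rpow_kernel_mul (hα : 0 < α) (hst : s ≤ t)
    (hh : MemLp h ∞ (volume.restrict (Ioc s t))) (u : ℝ) :
    IntervalIntegrable (fun τ => (u - τ) ^ (α - 1) * h τ) volume s t := by
  have hk := intervalIntegrable_rpow_kernel hα u s t
  rw [intervalIntegrable_iff_integrableOn_Ioc_of_le hst] at hk ⊢
  exact hk.mul_of_top_left hh

lemma rlInt_sub (hα : 0 < α) (hat : a ≤ t) (hf : MemLp f ∞ (volume.restrict (Ioc a t)))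
    (hh : MemLp h ∞ (volume.restrict (Ioc a t))) :
    rlInt a α (f - h) t = rlInt a α f t - rlInt a α h t := by
  simp only [rlInt_of_pos hα, Pi.sub_apply, mul_sub]
  rw [intervalIntegral.integral_sub (intervalIntegrable_rpow_kernel_mul hα hat hf t)
    (intervalIntegrable_rpow_kernel_mul hα hat hh t), mul_sub]

lemma abs_rlInt_le_of_ae_eq_zero {T C : ℝ} (hα : 0 < α) (haT : a ≤ T) (hTt : T ≤ t)
    (hzero : ∀ᵐ τ ∂volume.restrict (Ioc a T), h τ = 0)
    (hbound : ∀ᵐ τ ∂volume.restrict (Ioc T t), |h τ| ≤ C) :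
    |rlInt a α h t| ≤ C * ((t - T) ^ α / Real.Gamma (α + 1)) := by
  have : 0 < Real.Gamma α := Real.Gamma_pos_of_pos hα
  have hkC := (intervalIntegrable_rpow_kernel hα t T t).mul_const C
  have hmajorant : IntervalIntegrable
      ((Ioc T t).indicator fun τ => (t - τ) ^ (α - 1) * C) volume a t := by
    rw [intervalIntegrable_iff_integrableOn_Ioc_of_le hTt] at hkC
    exact ((integrable_indicator_iff measurableSet_Ioc).2 hkC).intervalIntegrable
  have hint : |∫ τ in a..t, (t - τ) ^ (α - 1) * h τ| ≤ C * ((t - T) ^ α / α) := by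
    calc |∫ τ in a..t, (t - τ) ^ (α - 1) * h τ|
        ≤ ∫ τ in a..t, (Ioc T t).indicator (fun τ => (t - τ) ^ (α - 1) * C) τ := by
          rw [← Real.norm_eq_abs]
          refine intervalIntegral.norm_integral_le_of_norm_le (haT.trans hTt) ?_ hmajorant
          filter_upwards [(ae_restrict_iff' measurableSet_Ioc).1 hzero,
            (ae_restrict_iff' measurableSet_Ioc).1 hbound] with τ hzero hbound hτ
          rcases le_or_gt τ T with hτT | hTτ
          · simp [hzero ⟨hτ.1, hτT⟩, hτT.not_gt]
          · rw [indicator_of_mem (show τ ∈ Ioc T t from ⟨hTτ, hτ.2⟩), norm_mul,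
              Real.norm_of_nonneg (Real.rpow_nonneg (sub_nonneg.2 hτ.2) _)]
            exact mul_le_mul_of_nonneg_left (hbound ⟨hTτ, hτ.2⟩)
              (Real.rpow_nonneg (sub_nonneg.2 hτ.2) _)
      _ = ∫ τ in T..t, (t - τ) ^ (α - 1) * C := by
          rw [intervalIntegral.integral_of_le (haT.trans hTt), intervalIntegral.integral_of_le hTt,
            setIntegral_indicator measurableSet_Ioc,
            inter_eq_self_of_subset_right (Ioc_subset_Ioc_left haT)]
      _ = C * ((t - T) ^ α / α) := by
          rw [intervalIntegral.integral_mul_const, integral_rpow_kernel hα, sub_self,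
            Real.zero_rpow hα.ne', sub_zero, mul_comm]
  rw [rlInt_of_pos hα, abs_mul, abs_of_pos (by positivity), Real.Gamma_add_one hα.ne']
  calc 1 / Real.Gamma α * |∫ τ in a..t, (t - τ) ^ (α - 1) * h τ|
      ≤ 1 / Real.Gamma α * (C * ((t - T) ^ α / α)) := by gcongr
    _ = C * ((t - T) ^ α / (α * Real.Gamma α)) := by field_simp

lemma abs_rlInt_le {C : ℝ} (hα : 0 < α) (hat : a ≤ t)
    (hbound : ∀ᵐ τ ∂volume.restrict (Ioc a t), |h τ| ≤ C) :
    |rlInt a α h t| ≤ C * ((t - a) ^ α / Real.Gamma (α + 1)) :=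
  abs_rlInt_le_of_ae_eq_zero hα le_rfl hat (by simp) hbound

lemma rlInt_sub_rlInt (hα : 0 < α) (has : a ≤ s) (hst : s ≤ t)
    (hh : MemLp h ∞ (volume.restrict (Ioc a t))) :
    rlInt a α h t - rlInt a α h s = rlInt s α h t +
      1 / Real.Gamma α * ∫ τ in a..s, ((t - τ) ^ (α - 1) - (s - τ) ^ (α - 1)) * h τ := by
  have hleft := intervalIntegrable_rpow_kernel_mul hα has
    (hh.mono_measure (Measure.restrict_mono (Ioc_subset_Ioc_right hst) le_rfl))
  have hright := intervalIntegrable_rpow_kernel_mul hα hst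
    (hh.mono_measure (Measure.restrict_mono (Ioc_subset_Ioc_left has) le_rfl))
  simp only [rlInt_of_pos hα, sub_mul]
  rw [← intervalIntegral.integral_add_adjacent_intervals (hleft t) (hright t),
    intervalIntegral.integral_sub (hleft t) (hleft s)]
  ring

lemma abs_integral_rpow_kernel_sub_mul_le {M : ℝ} (hα : 0 < α) (hα1 : α ≤ 1) (has : a ≤ s)
    (hst : s ≤ t) (hM : 0 ≤ M) (hbound : ∀ᵐ τ ∂volume.restrict (Ioc a s), |h τ| ≤ M) :
    |∫ τ in a..s, ((t - τ) ^ (α - 1) - (s - τ) ^ (α - 1)) * h τ| ≤ M * ((t - s) ^ α / α) := by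
  have hkt := intervalIntegrable_rpow_kernel hα t a s
  have hks := intervalIntegrable_rpow_kernel hα s a s
  calc |∫ τ in a..s, ((t - τ) ^ (α - 1) - (s - τ) ^ (α - 1)) * h τ|
      ≤ ∫ τ in a..s, ((s - τ) ^ (α - 1) - (t - τ) ^ (α - 1)) * M := by
        rw [← Real.norm_eq_abs]
        refine intervalIntegral.norm_integral_le_of_norm_le has ?_ ((hks.sub hkt).mul_const M)
        filter_upwards [(ae_restrict_iff' measurableSet_Ioc).1 hbound, volume.ae_ne s]
          with τ hbound hτs hτ
        have hkernel : (t - τ) ^ (α - 1) ≤ (s - τ) ^ (α - 1) :=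
          Real.rpow_le_rpow_of_nonpos (sub_pos.2 (hτ.2.lt_of_ne hτs)) (by linarith) (by linarith)
        rw [norm_mul, norm_sub_rev, Real.norm_of_nonneg (sub_nonneg.2 hkernel)]
        exact mul_le_mul_of_nonneg_left (hbound hτ) (sub_nonneg.2 hkernel)
    _ = M * (((s - a) ^ α - (t - a) ^ α + (t - s) ^ α) / α) := by
        rw [intervalIntegral.integral_mul_const, intervalIntegral.integral_sub hks hkt,
          integral_rpow_kernel hα, integral_rpow_kernel hα, sub_self, Real.zero_rpow hα.ne']
        ring
    _ ≤ M * ((t - s) ^ α / α) := by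
        have : (s - a) ^ α ≤ (t - a) ^ α :=
          Real.rpow_le_rpow (by linarith) (by linarith) hα.le
        gcongr
        linarith

lemma abs_rlInt_sub_rlInt_le {M : ℝ} (hα : 0 < α) (hα1 : α ≤ 1) (has : a ≤ s) (hst : s ≤ t)
    (hM : 0 ≤ M) (hh : AEStronglyMeasurable h (volume.restrict (Ioc a t)))
    (hbound : ∀ᵐ τ ∂volume.restrict (Ioc a t), |h τ| ≤ M) :
    |rlInt a α h t - rlInt a α h s| ≤ 2 * M / Real.Gamma (α + 1) * (t - s) ^ α := by
  have : 0 < Real.Gamma α := Real.Gamma_pos_of_pos hα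
  have hnew := abs_rlInt_le hα hst
    (ae_restrict_of_ae_restrict_of_subset (Ioc_subset_Ioc_left has) hbound)
  have hold := abs_integral_rpow_kernel_sub_mul_le hα hα1 has hst hM
    (ae_restrict_of_ae_restrict_of_subset (Ioc_subset_Ioc_right hst) hbound)
  rw [rlInt_sub_rlInt hα has hst (memLp_top_of_bound hh M hbound)]
  refine (abs_add_le _ _).trans ?_
  rw [abs_mul, abs_of_pos (by positivity : 0 < 1 / Real.Gamma α)]
  calc |rlInt s α h t| + 1 / Real.Gamma α *
        |∫ τ in a..s, ((t - τ) ^ (α - 1) - (s - τ) ^ (α - 1)) * h τ|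
      ≤ M * ((t - s) ^ α / Real.Gamma (α + 1)) + 1 / Real.Gamma α * (M * ((t - s) ^ α / α)) := by
        gcongr
    _ = 2 * M / Real.Gamma (α + 1) * (t - s) ^ α := by
        rw [Real.Gamma_add_one hα.ne']
        field_simp
        ring

lemma continuousOn_rlInt (hα : 0 < α) (hα1 : α ≤ 1)
    (hh : MemLp h ∞ (volume.restrict (Ioc a b))) : ContinuousOn (rlInt a α h) (Icc a b) := by
  set M := lpNorm h ∞ (volume.restrict (Ioc a b))
  have hmodulus : ∀ s ∈ Icc a b, ∀ t ∈ Icc a b, s ≤ t →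
      |rlInt a α h t - rlInt a α h s| ≤ 2 * M / Real.Gamma (α + 1) * |t - s| ^ α := by
    intro s hs t ht hst
    have hsub : Ioc a t ⊆ Ioc a b := Ioc_subset_Ioc_right ht.2
    rw [abs_of_nonneg (sub_nonneg.2 hst)]
    exact abs_rlInt_sub_rlInt_le hα hα1 hs.1 hst lpNorm_nonneg
      (hh.aestronglyMeasurable.mono_set hsub)
      (ae_restrict_of_ae_restrict_of_subset hsub (ae_le_lpNorm_exponent_top hh))
  intro s hs
  have hlim : Tendsto (fun t => 2 * M / Real.Gamma (α + 1) * |t - s| ^ α) (𝓝[Icc a b] s)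
      (𝓝 0) := by
    have hcont : ContinuousAt (fun t => 2 * M / Real.Gamma (α + 1) * |t - s| ^ α) s :=
      continuousAt_const.mul (ContinuousAt.rpow_const (by fun_prop) (Or.inr hα.le))
    simpa [Real.zero_rpow hα.ne'] using hcont.tendsto.mono_left nhdsWithin_le_nhds
  refine tendsto_iff_dist_tendsto_zero.2
    (squeeze_zero' (Eventually.of_forall fun _ => dist_nonneg) ?_ hlim)
  filter_upwards [self_mem_nhdsWithin] with t ht
  rcases le_total s t with hst | hts
  · exact hmodulus s hs t ht hst
  · rw [dist_comm, abs_sub_comm]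
    exact hmodulus t ht s hs hts

lemma memLp_top_of_continuousOn_Icc (hf : ContinuousOn f (Icc a b)) :
    MemLp f ∞ (volume.restrict (Ioc a b)) := by
  obtain ⟨M, hM⟩ := isCompact_Icc.exists_bound_of_continuousOn hf
  refine memLp_top_of_bound
    ((hf.mono Ioc_subset_Icc_self).aestronglyMeasurable measurableSet_Ioc) M ?_
  exact ae_restrict_of_forall_mem measurableSet_Ioc fun t ht => hM t (Ioc_subset_Icc_self ht)

lemma continuousOn_rlInt_of_continuousOn (hα : 0 ≤ α) (hα1 : α ≤ 1)
    (hf : ContinuousOn f (Icc a b)) : ContinuousOn (rlInt a α f) (Icc a b) := by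
  rcases hα.eq_or_lt with rfl | hα
  · rwa [rlInt_zero]
  · exact continuousOn_rlInt hα hα1 (memLp_top_of_continuousOn_Icc hf)

lemma beta_eq_intervalIntegral (hβ : 0 < β) (hγ : 0 < γ) :
    ProbabilityTheory.beta β γ = ∫ x in (0 : ℝ)..1, x ^ (β - 1) * (1 - x) ^ (γ - 1) := by
  rw [ProbabilityTheory.beta_eq_betaIntegralReal β γ hβ hγ, Complex.betaIntegral,
    ← Complex.ofReal_re (∫ x in (0 : ℝ)..1, _), ← intervalIntegral.integral_ofReal]
  congr 1
  refine intervalIntegral.integral_congr fun x hx => ?_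
  rw [uIcc_of_le zero_le_one] at hx
  simp only [Complex.ofReal_mul, Complex.ofReal_cpow hx.1, Complex.ofReal_cpow (sub_nonneg.2 hx.2),
    Complex.ofReal_sub, Complex.ofReal_one]

lemma integral_rpow_mul_rpow (hβ : 0 < β) (hγ : 0 < γ) {τ : ℝ} (hτt : τ < t) :
    ∫ s in τ..t, (t - s) ^ (β - 1) * (s - τ) ^ (γ - 1) =
      (t - τ) ^ (β + γ - 1) * ProbabilityTheory.beta γ β := by
  have hpos : 0 < t - τ := sub_pos.2 hτt
  have hsubst := intervalIntegral.smul_integral_comp_mul_add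
    (fun s => (t - s) ^ (β - 1) * (s - τ) ^ (γ - 1)) (a := 0) (b := 1) (t - τ) τ
  simp only [smul_eq_mul, mul_zero, zero_add, mul_one, sub_add_cancel] at hsubst
  rw [← hsubst, beta_eq_intervalIntegral hγ hβ, ← intervalIntegral.integral_const_mul,
    ← intervalIntegral.integral_const_mul]
  refine intervalIntegral.integral_congr fun x hx => ?_
  rw [uIcc_of_le zero_le_one] at hx
  have hexp : (t - τ) ^ (β + γ - 1) = (t - τ) * ((t - τ) ^ (β - 1) * (t - τ) ^ (γ - 1)) := by
    rw [show β + γ - 1 = 1 + ((β - 1) + (γ - 1)) by ring, Real.rpow_add hpos, Real.rpow_add hpos,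
      Real.rpow_one]
  have hleft : t - ((t - τ) * x + τ) = (t - τ) * (1 - x) := by ring
  rw [hleft, add_sub_cancel_right, Real.mul_rpow hpos.le (sub_nonneg.2 hx.2),
    Real.mul_rpow hpos.le hx.1, hexp]
  ring

/-- The integrand `(t - s) ^ (β - 1) * (s - τ) ^ (γ - 1)` of the iterated fractional integral,
extended by zero off the triangle `τ < s`. -/
noncomputable def abelKernel (β γ t s τ : ℝ) : ℝ :=
  if τ < s then (t - s) ^ (β - 1) * (s - τ) ^ (γ - 1) else 0

lemma abelKernel_nonneg {τ : ℝ} (hst : s ≤ t) : 0 ≤ abelKernel β γ t s τ := by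
  unfold abelKernel
  split_ifs with hτs
  · exact mul_nonneg (Real.rpow_nonneg (sub_nonneg.2 hst) _)
      (Real.rpow_nonneg (sub_nonneg.2 hτs.le) _)
  · exact le_rfl

lemma measurable_abelKernel : Measurable fun p : ℝ × ℝ => abelKernel β γ t p.1 p.2 :=
  Measurable.ite (measurableSet_lt measurable_snd measurable_fst) (by fun_prop) measurable_const

lemma setIntegral_abelKernel (hβ : 0 < β) (hγ : 0 < γ) {τ : ℝ} (haτ : a ≤ τ) (hτt : τ < t) :
    ∫ s in Ioc a t, abelKernel β γ t s τ =
      (t - τ) ^ (β + γ - 1) * ProbabilityTheory.beta γ β := by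
  have hindicator : (abelKernel β γ t · τ) =
      (Ioi τ).indicator fun s => (t - s) ^ (β - 1) * (s - τ) ^ (γ - 1) := by
    ext s
    simp only [abelKernel, indicator, mem_Ioi]
  rw [hindicator, setIntegral_indicator measurableSet_Ioi, Ioc_inter_Ioi, sup_of_le_right haτ,
    ← intervalIntegral.integral_of_le hτt.le, integral_rpow_mul_rpow hβ hγ hτt]

lemma integrableOn_abelKernel (hβ : 0 < β) (hγ : 0 < γ) {τ : ℝ} (haτ : a ≤ τ) (hτt : τ < t) :
    IntegrableOn (abelKernel β γ t · τ) (Ioc a t) := by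
  refine .of_integral_ne_zero ?_
  rw [setIntegral_abelKernel hβ hγ haτ hτt]
  exact mul_ne_zero (Real.rpow_pos_of_pos (sub_pos.2 hτt) _).ne'
    (ProbabilityTheory.beta_pos hγ hβ).ne'

lemma setIntegral_abelKernel_mul (has : a ≤ s) (hst : s ≤ t) (h : ℝ → ℝ) :
    ∫ τ in Ioc a t, abelKernel β γ t s τ * h τ =
      (t - s) ^ (β - 1) * ∫ τ in a..s, (s - τ) ^ (γ - 1) * h τ := by
  have hindicator : (fun τ => abelKernel β γ t s τ * h τ) =
      (Iio s).indicator fun τ => (t - s) ^ (β - 1) * ((s - τ) ^ (γ - 1) * h τ) := by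
    ext τ
    simp only [abelKernel, indicator, mem_Iio, ite_mul, zero_mul, mul_assoc]
  have hinter : Ioc a t ∩ Iio s = Ioo a s := by
    ext τ
    exact ⟨fun hτ => ⟨hτ.1.1, hτ.2⟩, fun hτ => ⟨⟨hτ.1, hτ.2.le.trans hst⟩, hτ.2⟩⟩
  rw [hindicator, setIntegral_indicator measurableSet_Iio, hinter, ← integral_Ioc_eq_integral_Ioo,
    integral_const_mul, ← intervalIntegral.integral_of_le has]

lemma integrable_abelKernel_mul (hβ : 0 < β) (hγ : 0 < γ)
    (hh : IntegrableOn (fun τ => (t - τ) ^ (β + γ - 1) * h τ) (Ioc a t)) :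
    Integrable (fun p : ℝ × ℝ => abelKernel β γ t p.1 p.2 * h p.2)
      ((volume.restrict (Ioc a t)).prod (volume.restrict (Ioc a t))) := by
  have hinterior : ∀ᵐ τ ∂volume.restrict (Ioc a t), a < τ ∧ τ < t := by
    filter_upwards [ae_restrict_mem measurableSet_Ioc, ae_restrict_of_ae (volume.ae_ne t)]
      with τ hτ hτt using ⟨hτ.1, hτ.2.lt_of_ne hτt⟩
  have hmeas : AEStronglyMeasurable h (volume.restrict (Ioc a t)) := by
    have hweight : Measurable fun τ : ℝ => ((t - τ) ^ (β + γ - 1))⁻¹ := by fun_prop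
    refine (hweight.aestronglyMeasurable.mul hh.aestronglyMeasurable).congr ?_
    filter_upwards [hinterior] with τ hτ
    exact inv_mul_cancel_left₀ (Real.rpow_pos_of_pos (sub_pos.2 hτ.2) _).ne' (h τ)
  refine (integrable_prod_iff' (measurable_abelKernel.aestronglyMeasurable.mul hmeas.comp_snd)).2
    ⟨?_, ?_⟩
  · filter_upwards [hinterior] with τ hτ
    exact (integrableOn_abelKernel hβ hγ hτ.1.le hτ.2).mul_const (h τ)
  · refine (hh.norm.mul_const (ProbabilityTheory.beta γ β)).congr ?_
    filter_upwards [hinterior] with τ hτ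
    have hnorm : EqOn (fun s => ‖abelKernel β γ t s τ * h τ‖)
        (fun s => abelKernel β γ t s τ * ‖h τ‖) (Ioc a t) := fun s hs => by
      simp only [norm_mul, Real.norm_of_nonneg (abelKernel_nonneg hs.2)]
    change _ = ∫ s in Ioc a t, ‖abelKernel β γ t s τ * h τ‖
    rw [setIntegral_congr_fun measurableSet_Ioc hnorm, integral_mul_const,
      setIntegral_abelKernel hβ hγ hτ.1.le hτ.2, norm_mul,
      Real.norm_of_nonneg (Real.rpow_nonneg (sub_nonneg.2 hτ.2.le) _)]
    ring

lemma integral_rpow_mul_integral_rpow_mul (hβ : 0 < β) (hγ : 0 < γ) (hat : a ≤ t)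
    (hh : IntegrableOn (fun τ => (t - τ) ^ (β + γ - 1) * h τ) (Ioc a t)) :
    ∫ s in a..t, (t - s) ^ (β - 1) * ∫ τ in a..s, (s - τ) ^ (γ - 1) * h τ =
      ProbabilityTheory.beta γ β * ∫ τ in a..t, (t - τ) ^ (β + γ - 1) * h τ := by
  calc ∫ s in a..t, (t - s) ^ (β - 1) * ∫ τ in a..s, (s - τ) ^ (γ - 1) * h τ
      = ∫ s in Ioc a t, ∫ τ in Ioc a t, abelKernel β γ t s τ * h τ := by
        rw [intervalIntegral.integral_of_le hat]
        exact setIntegral_congr_fun measurableSet_Ioc fun s hs =>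
          (setIntegral_abelKernel_mul hs.1.le hs.2 h).symm
    _ = ∫ τ in Ioc a t, ∫ s in Ioc a t, abelKernel β γ t s τ * h τ :=
        integral_integral_swap (integrable_abelKernel_mul hβ hγ hh)
    _ = ∫ τ in Ioc a t, ProbabilityTheory.beta γ β * ((t - τ) ^ (β + γ - 1) * h τ) := by
        refine integral_congr_ae ?_
        filter_upwards [ae_restrict_mem measurableSet_Ioc, ae_restrict_of_ae (volume.ae_ne t)]
          with τ hτ hτt
        rw [integral_mul_const, setIntegral_abelKernel hβ hγ hτ.1.le (hτ.2.lt_of_ne hτt)]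
        ring
    _ = ProbabilityTheory.beta γ β * ∫ τ in a..t, (t - τ) ^ (β + γ - 1) * h τ := by
        rw [integral_const_mul, intervalIntegral.integral_of_le hat]

lemma rlInt_rlInt_of_pos (hβ : 0 < β) (hγ : 0 < γ) (hat : a ≤ t)
    (hh : IntegrableOn (fun τ => (t - τ) ^ (β + γ - 1) * h τ) (Ioc a t)) :
    rlInt a β (rlInt a γ h) t = rlInt a (β + γ) h t := by
  have hΓβ := (Real.Gamma_pos_of_pos hβ).ne'
  have hΓγ := (Real.Gamma_pos_of_pos hγ).ne'
  simp only [rlInt_of_pos hβ, rlInt_of_pos hγ, rlInt_of_pos (add_pos hβ hγ), mul_left_comm _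
    (1 / Real.Gamma γ), intervalIntegral.integral_const_mul,
    integral_rpow_mul_integral_rpow_mul hβ hγ hat hh, ProbabilityTheory.beta, add_comm γ β]
  field_simp

lemma rlInt_rlInt (hβ : 0 ≤ β) (hγ : 0 ≤ γ) (hat : a ≤ t)
    (hh : MemLp h ∞ (volume.restrict (Ioc a t))) :
    rlInt a β (rlInt a γ h) t = rlInt a (β + γ) h t := by
  rcases hβ.eq_or_lt with rfl | hβ
  · rw [rlInt_zero, zero_add]
  rcases hγ.eq_or_lt with rfl | hγ
  · rw [rlInt_zero, add_zero]
  have hint := intervalIntegrable_rpow_kernel_mul (add_pos hβ hγ) hat hh t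
  rw [intervalIntegrable_iff_integrableOn_Ioc_of_le hat] at hint
  exact rlInt_rlInt_of_pos hβ hγ hat hint

lemma eqOn_Icc_of_integral_eq (hab : a < b) (hf : ContinuousOn f (Icc a b))
    (hh : ContinuousOn h (Icc a b))
    (hfh : ∀ t ∈ Icc a b, ∫ τ in a..t, f τ = ∫ τ in a..t, h τ) : EqOn f h (Icc a b) := by
  have hderiv : ∀ {u : ℝ → ℝ}, ContinuousOn u (Icc a b) → ∀ x ∈ Ioo a b,
      HasDerivAt (fun t => ∫ τ in a..t, u τ) (u x) x := by
    intro u hu x hx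
    have hx_nhds : Icc a b ∈ 𝓝 x := Icc_mem_nhds hx.1 hx.2
    refine intervalIntegral.integral_hasDerivAt_right ?_ ?_ (hu.continuousAt hx_nhds)
    · exact (hu.mono (Icc_subset_Icc_right hx.2.le)).intervalIntegrable_of_Icc hx.1.le
    · rw [← nhdsWithin_eq_nhds.2 hx_nhds]
      exact hu.stronglyMeasurableAtFilter_nhdsWithin measurableSet_Icc x
  refine Measure.eqOn_Icc_of_ae_eq volume hab.ne ?_ hf hh
  rw [← Measure.restrict_congr_set Ioo_ae_eq_Icc]
  filter_upwards [ae_restrict_mem measurableSet_Ioo] with x hx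
  refine (hderiv hf x hx).unique ((hderiv hh x hx).congr_of_eventuallyEq ?_)
  filter_upwards [Icc_mem_nhds hx.1 hx.2] with t ht using hfh t ht

lemma rlInt_one_sub_eq_integral (hα : 0 ≤ α) (hα1 : α ≤ 1) (hat : a ≤ t)
    (hh : MemLp h ∞ (volume.restrict (Ioc a t))) (hf : EqOn f (rlInt a α h) (Icc a t)) :
    rlInt a (1 - α) f t = ∫ τ in a..t, h τ := by
  rw [rlInt_congr (sub_nonneg.2 hα1) hat hf, rlInt_rlInt (sub_nonneg.2 hα1) hα hat hh,
    sub_add_cancel, rlInt_one]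

-- Both sides have the same primitive: `I¹f = I^α (I^{1-α} f) = I^α (I¹h) = I¹(I^α h)`.
lemma eqOn_rlInt_of_rlInt_one_sub_eq {c : ℝ} (hα : 0 < α) (hα1 : α ≤ 1) (hab : a < b)
    (hf : ContinuousOn f (Icc a b)) (hfa : f a = 0) (hh : MemLp h ∞ (volume.restrict (Ioc a b)))
    (hfh : ∀ᵐ t ∂volume.restrict (Icc a b), rlInt a (1 - α) f t = c + ∫ τ in a..t, h τ) :
    EqOn f (rlInt a α h) (Icc a b) := by
  have hα' : 0 ≤ 1 - α := sub_nonneg.2 hα1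
  have ha : a ∈ Icc a b := left_mem_Icc.2 hab.le
  have hprim : ContinuousOn (fun t => c + rlInt a 1 h t) (Icc a b) :=
    continuousOn_const.add (continuousOn_rlInt one_pos le_rfl hh)
  have heq : EqOn (rlInt a (1 - α) f) (fun t => c + rlInt a 1 h t) (Icc a b) := by
    simp only [← rlInt_one] at hfh
    exact Measure.eqOn_Icc_of_ae_eq volume hab.ne hfh
      (continuousOn_rlInt_of_continuousOn hα' (by linarith) hf) hprim
  have hc : c = 0 := by
    have hcongr : rlInt a (1 - α) f a = 0 := by
      rcases hα'.eq_or_lt with h0 | h0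
      · rw [← h0, rlInt_zero, hfa]
      · exact rlInt_self h0
    simpa [hcongr, rlInt_one, eq_comm] using heq ha
  simp only [hc, zero_add] at heq
  refine eqOn_Icc_of_integral_eq hab hf (continuousOn_rlInt hα hα1 hh) fun t ht => ?_
  have hf_t := memLp_top_of_continuousOn_Icc (hf.mono (Icc_subset_Icc_right ht.2))
  have hh_t := hh.mono_measure (Measure.restrict_mono (Ioc_subset_Ioc_right ht.2) le_rfl)
  calc ∫ τ in a..t, f τ = rlInt a α (rlInt a (1 - α) f) t := by
        rw [rlInt_rlInt hα.le hα' ht.1 hf_t, add_sub_cancel, rlInt_one]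
    _ = rlInt a α (rlInt a 1 h) t :=
        rlInt_congr hα.le ht.1 (heq.mono (Icc_subset_Icc_right ht.2))
    _ = rlInt a 1 (rlInt a α h) t := by
        rw [rlInt_rlInt hα.le zero_le_one ht.1 hh_t, rlInt_rlInt zero_le_one hα.le ht.1 hh_t,
          add_comm]
    _ = ∫ τ in a..t, rlInt a α h τ := rlInt_one

end RiemannLiouville

section Caratheodory

variable {T X Y : Type*} [MeasurableSpace T] {μ : Measure T} {F : X → T → Y} {Ω : Set X}

lemma ae_forall_of_isClosed [TopologicalSpace X] [TopologicalSpace.SeparableSpace X]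
    {P : X → T → Prop} (hclosed : ∀ᵐ t ∂μ, IsClosed {x | P x t}) (hP : ∀ x, ∀ᵐ t ∂μ, P x t) :
    ∀ᵐ t ∂μ, ∀ x, P x t := by
  obtain ⟨D, hDcountable, hDdense⟩ := TopologicalSpace.exists_countable_dense X
  filter_upwards [hclosed, (ae_ball_iff hDcountable).2 fun x _ => hP x] with t hclosed hD x
  exact hclosed.closure_subset_iff.2 hD (hDdense x)

lemma ae_forall_mem_norm_le [TopologicalSpace X] [SecondCountableTopology X]
    [SeminormedAddCommGroup Y] {K : Set X} {M : ℝ}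
    (hcont : ∀ᵐ t ∂μ, ContinuousOn (F · t) K) (hbound : ∀ x ∈ K, ∀ᵐ t ∂μ, ‖F x t‖ ≤ M) :
    ∀ᵐ t ∂μ, ∀ x ∈ K, ‖F x t‖ ≤ M := by
  suffices ∀ᵐ t ∂μ, ∀ x : K, ‖F x t‖ ≤ M by simpa only [Subtype.forall] using this
  refine ae_forall_of_isClosed ?_ fun x => hbound x x.2
  filter_upwards [hcont] with t ht
  exact isClosed_le ht.domRestrict.norm continuous_const

lemma ae_lipschitzOnWith [PseudoMetricSpace X] [SecondCountableTopology X] [PseudoMetricSpace Y]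
    {K : Set X} {L : ℝ≥0} (hcont : ∀ᵐ t ∂μ, ContinuousOn (F · t) K)
    (hlip : ∀ x ∈ K, ∀ y ∈ K, ∀ᵐ t ∂μ, dist (F x t) (F y t) ≤ L * dist x y) :
    ∀ᵐ t ∂μ, LipschitzOnWith L (F · t) K := by
  suffices ∀ᵐ t ∂μ, ∀ p : K × K, dist (F p.1 t) (F p.2 t) ≤ L * dist (p.1 : X) p.2 by
    filter_upwards [this] with t ht
    exact .of_dist_le_mul fun x hx y hy => ht (⟨x, hx⟩, ⟨y, hy⟩)
  refine ae_forall_of_isClosed ?_ fun p => hlip p.1 p.1.2 p.2 p.2.2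
  filter_upwards [hcont] with t ht
  have hFt : Continuous fun x : K => F x t := ht.domRestrict
  exact isClosed_le ((hFt.comp continuous_fst).dist (hFt.comp continuous_snd)) (by fun_prop)

variable [TopologicalSpace Y] [TopologicalSpace.PseudoMetrizableSpace Y]

lemma aestronglyMeasurable_superposition_simpleFunc [MeasurableSpace X]
    (hmeas : ∀ x ∈ Ω, AEStronglyMeasurable (F x) μ) (s : SimpleFunc T X) (hs : ∀ t, s t ∈ Ω) :
    AEStronglyMeasurable (fun t => F (s t) t) μ := by
  have hcover : ⋃ x : s.range, s ⁻¹' {(x : X)} = univ :=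
    eq_univ_of_forall fun t => mem_iUnion.2 ⟨⟨s t, s.mem_range_self t⟩, rfl⟩
  rw [← Measure.restrict_univ (μ := μ), ← hcover, aestronglyMeasurable_iUnion_iff]
  rintro ⟨x, hx⟩
  obtain ⟨t, rfl⟩ := SimpleFunc.mem_range.1 hx
  refine (hmeas (s t) (hs t)).restrict.congr ?_
  refine ae_restrict_of_forall_mem (s.measurableSet_fiber _) fun τ hτ => ?_
  change F (s t) τ = F (s τ) τ
  rw [show s τ = s t from hτ]

lemma aestronglyMeasurable_superposition [PseudoEMetricSpace X] [SecondCountableTopology X]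
    [MeasurableSpace X] [OpensMeasurableSpace X] (hmeas : ∀ x ∈ Ω, AEStronglyMeasurable (F x) μ)
    (hcont : ∀ᵐ t ∂μ, ContinuousOn (F · t) Ω) {q : T → X} (hq : AEMeasurable q μ)
    (hqΩ : ∀ᵐ t ∂μ, q t ∈ Ω) : AEStronglyMeasurable (fun t => F (q t) t) μ := by
  rcases Ω.eq_empty_or_nonempty with rfl | ⟨x₀, hx₀⟩
  · have hμ : μ = 0 := by simpa using hqΩ
    simp [hμ]
  obtain ⟨p, hp, hpΩ, hqp⟩ := hq.exists_ae_eq_range_subset hqΩ ⟨x₀, hx₀⟩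
  let s := SimpleFunc.approxOn p hp Ω x₀ hx₀
  have hsΩ : ∀ n t, s n t ∈ Ω := fun n t => SimpleFunc.approxOn_mem hp hx₀ n t
  have hs : ∀ t, Tendsto (s · t) atTop (𝓝 (p t)) := fun t =>
    SimpleFunc.tendsto_approxOn hp hx₀ (subset_closure (hpΩ ⟨t, rfl⟩))
  refine aestronglyMeasurable_of_tendsto_ae atTop (f := fun n t => F (s n t) t)
    (fun n => aestronglyMeasurable_superposition_simpleFunc hmeas (s n) (hsΩ n)) ?_
  filter_upwards [hcont, hqp] with t hcont hqp
  rw [hqp]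
  exact (hcont (p t) (hpΩ ⟨t, rfl⟩)).tendsto.comp
    (tendsto_nhdsWithin_iff.2 ⟨hs t, Eventually.of_forall fun n => hsΩ n t⟩)

end Caratheodory

lemma eqOn_Icc_of_forall_exists_gt {A X : Type*} [ConditionallyCompleteLinearOrder A]
    [DenselyOrdered A] [TopologicalSpace A] [OrderTopology A] [TopologicalSpace X] [T2Space X]
    {a b : A} {f g : A → X} (hf : ContinuousOn f (Icc a b)) (hg : ContinuousOn g (Icc a b))
    (ha : f a = g a)
    (hstep : ∀ T ∈ Ico a b, EqOn f g (Icc a T) → ∃ z > T, EqOn f g (Icc a z)) :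
    EqOn f g (Icc a b) := by
  by_contra hne
  obtain ⟨t, ht, hft⟩ : ∃ t ∈ Icc a b, f t ≠ g t := by simpa [EqOn, and_assoc] using hne
  set S := {t ∈ Icc a b | f t ≠ g t}
  have hSbdd : BddBelow S := ⟨a, fun s hs => hs.1.1⟩
  have haT : a ≤ sInf S := le_csInf ⟨t, ht, hft⟩ fun s hs => hs.1.1
  have hTt : sInf S ≤ t := csInf_le hSbdd ⟨ht, hft⟩
  have hIco : EqOn f g (Ico a (sInf S)) := fun s hs => not_not.1 fun hfs =>
    (csInf_le hSbdd ⟨⟨hs.1, hs.2.le.trans (hTt.trans ht.2)⟩, hfs⟩).not_gt hs.2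
  have hIcc : EqOn f g (Icc a (sInf S)) := by
    rcases haT.eq_or_lt with haT | haT
    · rw [← haT, Icc_self]
      exact eqOn_singleton.2 ha
    · have hsub : Icc a (sInf S) ⊆ Icc a b := Icc_subset_Icc_right (hTt.trans ht.2)
      exact hIco.of_subset_closure (hf.mono hsub) (hg.mono hsub) Ico_subset_Icc_self
        (closure_Ico haT.ne).ge
  have hTlt : sInf S < t := hTt.lt_of_ne fun hT => hft (hIcc ⟨ht.1, hT.ge⟩)
  obtain ⟨z, hTz, hz⟩ := hstep (sInf S) ⟨haT, hTlt.trans_le ht.2⟩ hIcc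
  refine hTz.not_ge (le_csInf ⟨t, ht, hft⟩ fun s hs => le_of_not_gt fun hsz => hs.2 ?_)
  exact hz ⟨hs.1.1, hsz.le⟩

lemma exists_eqOn_fixedPoint_of_isCompact {X E : Type*} [TopologicalSpace X] [MetricSpace E]
    [CompleteSpace E] {K : Set X} {B : Set E} {c : ℝ≥0} {Φ : (X → E) → X → E} (hK : IsCompact K)
    (hB : IsClosed B) (hBne : B.Nonempty) (hc : c < 1)
    (hcont : ∀ q, ContinuousOn q K → MapsTo q K B → ContinuousOn (Φ q) K)
    (hmaps : ∀ q, ContinuousOn q K → MapsTo q K B → MapsTo (Φ q) K B)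
    (hcontr : ∀ q p, ContinuousOn q K → MapsTo q K B → ContinuousOn p K → MapsTo p K B →
      ∀ D, (∀ x ∈ K, dist (q x) (p x) ≤ D) → ∀ x ∈ K, dist (Φ q x) (Φ p x) ≤ c * D) :
    ∃ q, ContinuousOn q K ∧ MapsTo q K B ∧ EqOn q (Φ q) K := by
  have : CompactSpace K := isCompact_iff_compactSpace.1 hK
  obtain ⟨e, he⟩ := hBne
  let S : Set C(K, E) := {q | ∀ x, q x ∈ B}
  have hSclosed : IsClosed S := by
    simp only [S, ofPred_forall]
    exact isClosed_iInter fun x => hB.preimage (continuous_eval_const x)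
  have : CompleteSpace S := hSclosed.completeSpace_coe
  have : Nonempty S := ⟨ContinuousMap.const K e, fun _ => he⟩
  let extend (q : S) : X → E := Function.extend Subtype.val q.1 fun _ => e
  have extend_apply (q : S) (x : K) : extend q x = q.1 x := Subtype.val_injective.extend_apply ..
  have continuousOn_extend (q : S) : ContinuousOn (extend q) K :=
    continuousOn_iff_continuous_domRestrict.2
      (q.1.continuous.congr fun x => (extend_apply q x).symm)
  have mapsTo_extend (q : S) : MapsTo (extend q) K B := fun x hx => by
    rw [extend_apply q ⟨x, hx⟩]
    exact q.2 ⟨x, hx⟩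
  let Ψ (q : S) : S :=
    ⟨⟨K.domRestrict (Φ (extend q)),
        (hcont _ (continuousOn_extend q) (mapsTo_extend q)).domRestrict⟩,
      fun x => hmaps _ (continuousOn_extend q) (mapsTo_extend q) x.2⟩
  have hΨ : ContractingWith c Ψ := by
    refine ⟨hc, .of_dist_le_mul fun q p => (ContinuousMap.dist_le (by positivity)).2 fun x => ?_⟩
    refine hcontr _ _ (continuousOn_extend q) (mapsTo_extend q) (continuousOn_extend p)
      (mapsTo_extend p) (dist q p) (fun y hy => ?_) x x.2
    rw [extend_apply q ⟨y, hy⟩, extend_apply p ⟨y, hy⟩]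
    exact ContinuousMap.dist_apply_le_dist (f := q.1) (g := p.1) ⟨y, hy⟩
  obtain ⟨q, hq⟩ : ∃ q, Ψ q = q := ⟨_, hΨ.fixedPoint_isFixedPt⟩
  refine ⟨extend q, continuousOn_extend q, mapsTo_extend q, fun x hx => ?_⟩
  calc extend q x = q.1 ⟨x, hx⟩ := extend_apply q ⟨x, hx⟩
    _ = (Ψ q).1 ⟨x, hx⟩ := by rw [hq]
    _ = Φ (extend q) x := rfl

section IntervalFrom

variable {a b : ℝ} {I : Set ℝ}

lemma IsIntervalFrom.Icc_subset (hI : IsIntervalFrom a I) (hb : b ∈ I) : Icc a b ⊆ I :=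
  hI.2.2.2.out hI.1 hb

lemma IsIntervalFrom.exists_gt (hI : IsIntervalFrom a I) : ∃ b ∈ I, a < b := by
  obtain ⟨b, hb⟩ := hI.2.2.1
  refine ⟨b, interior_subset hb, ?_⟩
  simpa using interior_mono hI.2.1 hb

lemma IsIntervalFrom.continuousOn {X : Type*} [TopologicalSpace X] {q : ℝ → X}
    (hI : IsIntervalFrom a I) (hq : ∀ b ∈ I, ContinuousOn q (Icc a b)) : ContinuousOn q I := by
  intro t ht
  by_cases hlast : ∃ b ∈ I, t < b
  · obtain ⟨b, hb, htb⟩ := hlast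
    refine (hq b hb t ⟨hI.2.1 ht, htb.le⟩).mono_of_mem_nhdsWithin ?_
    filter_upwards [self_mem_nhdsWithin, mem_nhdsWithin_of_mem_nhds (Iio_mem_nhds htb)]
      with s hs hsb using ⟨hI.2.1 hs, hsb.le⟩
  · push Not at hlast
    exact (hq t ht t (right_mem_Icc.2 (hI.2.1 ht))).mono fun s hs => ⟨hI.2.1 hs, hlast s hs⟩

end IntervalFrom

section VectorRiemannLiouville

variable {ι : Type*} {α : ι → ℝ} {a b t : ℝ} {f h : ℝ → EuclideanSpace ℝ ι}

/-- Riemann–Liouville fractional integral of a vector-valued function, whose `i`-th component is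
integrated to the order `α i`. -/
noncomputable def rlIntVec (a : ℝ) (α : ι → ℝ) (h : ℝ → EuclideanSpace ℝ ι) (t : ℝ) :
    EuclideanSpace ℝ ι :=
  WithLp.toLp 2 fun i => rlInt a (α i) (h · i) t

lemma rlIntVec_self (hα : ∀ i, 0 < α i) : rlIntVec a α h a = 0 := by
  ext i
  exact rlInt_self (hα i)

lemma rlIntVec_congr (hα : ∀ i, 0 < α i) (hat : a ≤ t) (hfh : EqOn f h (Icc a t)) :
    rlIntVec a α f t = rlIntVec a α h t := by
  ext i
  exact rlInt_congr (hα i).le hat fun τ hτ => congrArg (· i) (hfh hτ)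

variable [Fintype ι]

lemma euclideanSpace_norm_le_sum_abs (x : EuclideanSpace ℝ ι) : ‖x‖ ≤ ∑ i, |x i| := by
  have hx : 0 ≤ ∑ i, |x i| := Finset.sum_nonneg fun i _ => abs_nonneg (x i)
  rw [EuclideanSpace.norm_eq]
  refine Real.sqrt_le_iff.2 ⟨hx, ?_⟩
  simpa only [Real.norm_eq_abs] using
    Finset.sum_sq_le_sq_sum_of_nonneg fun i _ => abs_nonneg (x i)

/-- The sum of the total masses of the kernels `τ ↦ (η - τ) ^ (α i - 1) / Γ (α i)` on `[0, η]`: it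
bounds the norm of the fractional integral of a function of norm at most one over an interval of
length `η`. -/
noncomputable def rlMass (α : ι → ℝ) (η : ℝ) : ℝ :=
  ∑ i, η ^ α i / Real.Gamma (α i + 1)

lemma rlMass_nonneg (hα : ∀ i, 0 < α i) {η : ℝ} (hη : 0 ≤ η) : 0 ≤ rlMass α η :=
  Finset.sum_nonneg fun i _ => div_nonneg (Real.rpow_nonneg hη _)
    (Real.Gamma_nonneg_of_nonneg (by linarith [hα i]))

lemma rlMass_le_rlMass (hα : ∀ i, 0 < α i) {η ζ : ℝ} (hη : 0 ≤ η) (hηζ : η ≤ ζ) :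
    rlMass α η ≤ rlMass α ζ :=
  Finset.sum_le_sum fun i _ => div_le_div_of_nonneg_right
    (Real.rpow_le_rpow hη hηζ (hα i).le) (Real.Gamma_nonneg_of_nonneg (by linarith [hα i]))

lemma tendsto_const_mul_rlMass_sub (hα : ∀ i, 0 < α i) (C T : ℝ) :
    Tendsto (fun t => C * rlMass α (t - T)) (𝓝 T) (𝓝 0) := by
  have hcont : Continuous fun t => C * rlMass α (t - T) := by
    refine continuous_const.mul (continuous_finsetSum _ fun i _ => Continuous.div_const ?_ _)
    exact (continuous_id.sub continuous_const).rpow_const fun _ => Or.inr (hα i).le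
  have hzero : C * rlMass α (T - T) = 0 := by
    simp [rlMass, fun i => Real.zero_rpow (hα i).ne']
  simpa only [hzero] using hcont.tendsto T

lemma rlIntVec_sub (hα : ∀ i, 0 < α i) (hat : a ≤ t)
    (hf : MemLp f ∞ (volume.restrict (Ioc a t))) (hh : MemLp h ∞ (volume.restrict (Ioc a t))) :
    rlIntVec a α (f - h) t = rlIntVec a α f t - rlIntVec a α h t := by
  ext i
  exact rlInt_sub (hα i) hat (hf.eval_piLp i) (hh.eval_piLp i)

lemma continuousOn_rlIntVec (hα : ∀ i, 0 < α i) (hα1 : ∀ i, α i ≤ 1)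
    (hh : MemLp h ∞ (volume.restrict (Ioc a b))) : ContinuousOn (rlIntVec a α h) (Icc a b) :=
  (PiLp.continuous_toLp 2 _).comp_continuousOn <| continuousOn_pi.2 fun i =>
    continuousOn_rlInt (hα i) (hα1 i) (hh.eval_piLp i)

lemma norm_rlIntVec_le_of_ae_eq_zero {T C : ℝ} (hα : ∀ i, 0 < α i) (haT : a ≤ T) (hTt : T ≤ t)
    (hzero : ∀ᵐ τ ∂volume.restrict (Ioc a T), h τ = 0)
    (hbound : ∀ᵐ τ ∂volume.restrict (Ioc T t), ‖h τ‖ ≤ C) :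
    ‖rlIntVec a α h t‖ ≤ C * rlMass α (t - T) := by
  refine (euclideanSpace_norm_le_sum_abs _).trans ?_
  rw [rlMass, Finset.mul_sum]
  refine Finset.sum_le_sum fun i _ => abs_rlInt_le_of_ae_eq_zero (hα i) haT hTt ?_ ?_
  · filter_upwards [hzero] with τ hτ
    rw [hτ, PiLp.zero_apply]
  · filter_upwards [hbound] with τ hτ using (PiLp.norm_apply_le (h τ) i).trans hτ

end VectorRiemannLiouville

section AdmissibleField

variable {E : Type*} [NormedAddCommGroup E] {If : Set ℝ} {Ω : Set E} {F : E → ℝ → E}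

/-- The standing hypotheses on the right-hand side `F : Ω × If → E` of the Cauchy problem: it is a
Carathéodory function, bounded on compacts, and locally Lipschitz in its first variable. In the last
two conditions the exceptional null set may depend on the points of `Ω`. -/
structure IsAdmissibleField (If : Set ℝ) (Ω : Set E) (F : E → ℝ → E) : Prop where
  aestronglyMeasurable : ∀ x ∈ Ω, AEStronglyMeasurable (F x) (volume.restrict If)
  ae_continuousOn : ∀ᵐ t ∂volume.restrict If, ContinuousOn (F · t) Ω
  exists_norm_le : ∀ K : Set E, K ⊆ Ω → IsCompact K → ∀ c ∈ If, ∀ d ∈ If, c ≤ d →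
    ∃ M : ℝ, 0 ≤ M ∧ ∀ x ∈ K, ∀ᵐ t ∂volume.restrict (Icc c d), ‖F x t‖ ≤ M
  exists_lipschitz : ∀ x ∈ Ω, ∀ t ∈ If, ∃ R > (0 : ℝ), ∃ δ > (0 : ℝ), ∃ L : ℝ, 0 ≤ L ∧
    Metric.closedBall x R ⊆ Ω ∧ ∀ x₁ ∈ Metric.closedBall x R, ∀ x₂ ∈ Metric.closedBall x R,
      ∀ᵐ τ ∂volume.restrict (Icc (t - δ) (t + δ) ∩ If), ‖F x₂ τ - F x₁ τ‖ ≤ L * ‖x₂ - x₁‖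

variable [SecondCountableTopology E]

lemma IsAdmissibleField.exists_ae_forall_norm_le (hF : IsAdmissibleField If Ω F) {K : Set E}
    (hK : IsCompact K) (hKΩ : K ⊆ Ω) {a b : ℝ} (hab : a ≤ b) (hsub : Icc a b ⊆ If) :
    ∃ M, 0 ≤ M ∧ ∀ᵐ t ∂volume.restrict (Icc a b), ∀ x ∈ K, ‖F x t‖ ≤ M := by
  obtain ⟨M, hM₀, hM⟩ := hF.exists_norm_le K hKΩ hK a (hsub (left_mem_Icc.2 hab)) b
    (hsub (right_mem_Icc.2 hab)) hab
  refine ⟨M, hM₀, ae_forall_mem_norm_le ?_ hM⟩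
  filter_upwards [ae_restrict_of_ae_restrict_of_subset hsub hF.ae_continuousOn] with t ht
    using ht.mono hKΩ

lemma IsAdmissibleField.exists_ae_lipschitzOnWith (hF : IsAdmissibleField If Ω F) {x : E} {t : ℝ}
    (hx : x ∈ Ω) (ht : t ∈ If) :
    ∃ R > 0, ∃ δ > 0, ∃ L : ℝ≥0, Metric.closedBall x R ⊆ Ω ∧
      ∀ᵐ τ ∂volume.restrict (Icc (t - δ) (t + δ) ∩ If),
        LipschitzOnWith L (F · τ) (Metric.closedBall x R) := by
  obtain ⟨R, hR, δ, hδ, L, hL, hRΩ, hlip⟩ := hF.exists_lipschitz x hx t ht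
  refine ⟨R, hR, δ, hδ, ⟨L, hL⟩, hRΩ, ae_lipschitzOnWith ?_ fun y hy z hz => ?_⟩
  · filter_upwards [ae_restrict_of_ae_restrict_of_subset inter_subset_right hF.ae_continuousOn]
      with τ hτ using hτ.mono hRΩ
  · simp only [dist_eq_norm]
    exact hlip z hz y hy

lemma IsAdmissibleField.memLp_comp (hF : IsAdmissibleField If Ω F) {q : ℝ → E} {a b : ℝ}
    (hsub : Icc a b ⊆ If) (hq : ContinuousOn q (Icc a b)) (hqΩ : MapsTo q (Icc a b) Ω) :
    MemLp (fun t => F (q t) t) ∞ (volume.restrict (Ioc a b)) := by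
  rcases lt_or_ge b a with hba | hab
  · simp [Ioc_eq_empty hba.not_gt]
  borelize E
  have hsub' : Ioc a b ⊆ If := Ioc_subset_Icc_self.trans hsub
  have hmem : ∀ᵐ t ∂volume.restrict (Ioc a b), t ∈ Icc a b :=
    ae_restrict_of_forall_mem measurableSet_Ioc fun t ht => Ioc_subset_Icc_self ht
  obtain ⟨M, -, hM⟩ := hF.exists_ae_forall_norm_le (isCompact_Icc.image_of_continuousOn hq)
    hqΩ.image_subset hab hsub
  refine memLp_top_of_bound (aestronglyMeasurable_superposition
    (fun x hx => (hF.aestronglyMeasurable x hx).mono_set hsub')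
    (ae_restrict_of_ae_restrict_of_subset hsub' hF.ae_continuousOn)
    ((hq.mono Ioc_subset_Icc_self).aemeasurable measurableSet_Ioc)
    (hmem.mono fun t ht => hqΩ ht)) M ?_
  filter_upwards [hmem, ae_restrict_of_ae_restrict_of_subset Ioc_subset_Icc_self hM]
    with t ht hMt using hMt (q t) (mem_image_of_mem q ht)

end AdmissibleField

section VolterraEquation

variable {ι : Type*} {a b t T : ℝ} {If : Set ℝ} {Ω B : Set (EuclideanSpace ℝ ι)}
  {α : ι → ℝ} {qa : EuclideanSpace ℝ ι} {F : EuclideanSpace ℝ ι → ℝ → EuclideanSpace ℝ ι}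
  {q p : ℝ → EuclideanSpace ℝ ι}

/-- The Picard operator of the Volterra equation `q = qa + I^α [F(q(·), ·)]`. -/
noncomputable def picard (a : ℝ) (α : ι → ℝ) (qa : EuclideanSpace ℝ ι)
    (F : EuclideanSpace ℝ ι → ℝ → EuclideanSpace ℝ ι) (q : ℝ → EuclideanSpace ℝ ι) (t : ℝ) :
    EuclideanSpace ℝ ι :=
  qa + rlIntVec a α (fun τ => F (q τ) τ) t

/-- `q` is a continuous `Ω`-valued solution on `[a, b]` of the Volterra equation
`q = qa + I^α [F(q(·), ·)]`, the integral form of the Caputo Cauchy problem. -/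
structure IsVolterraSol (a : ℝ) (Ω : Set (EuclideanSpace ℝ ι)) (α : ι → ℝ)
    (qa : EuclideanSpace ℝ ι) (F : EuclideanSpace ℝ ι → ℝ → EuclideanSpace ℝ ι)
    (q : ℝ → EuclideanSpace ℝ ι) (b : ℝ) : Prop where
  continuousOn : ContinuousOn q (Icc a b)
  mapsTo : MapsTo q (Icc a b) Ω
  eqOn_picard : EqOn q (picard a α qa F q) (Icc a b)

lemma IsVolterraSol.mono (hq : IsVolterraSol a Ω α qa F q b) (htb : t ≤ b) :
    IsVolterraSol a Ω α qa F q t :=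
  have hsub : Icc a t ⊆ Icc a b := Icc_subset_Icc_right htb
  ⟨hq.continuousOn.mono hsub, hq.mapsTo.mono_left hsub, hq.eqOn_picard.mono hsub⟩

lemma IsVolterraSol.apply_left (hα : ∀ i, 0 < α i) (hq : IsVolterraSol a Ω α qa F q b)
    (hab : a ≤ b) : q a = qa := by
  rw [hq.eqOn_picard (left_mem_Icc.2 hab), picard, rlIntVec_self hα, add_zero]

lemma IsVolterraSol.congr (hα : ∀ i, 0 < α i) (hq : IsVolterraSol a Ω α qa F q b)
    (hqp : EqOn q p (Icc a b)) : IsVolterraSol a Ω α qa F p b := by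
  refine ⟨hq.continuousOn.congr hqp.symm, hq.mapsTo.congr hqp, fun t ht => ?_⟩
  have hcongr : EqOn (fun τ => F (q τ) τ) (fun τ => F (p τ) τ) (Icc a t) := fun τ hτ =>
    congrArg (F · τ) (hqp (Icc_subset_Icc_right ht.2 hτ))
  rw [← hqp ht, hq.eqOn_picard ht, picard, picard, rlIntVec_congr hα ht.1 hcongr]

variable [Fintype ι]

lemma IsVolterraSol.memLp (hF : IsAdmissibleField If Ω F) (hsub : Icc a b ⊆ If)
    (hq : IsVolterraSol a Ω α qa F q b) :
    MemLp (fun τ => F (q τ) τ) ∞ (volume.restrict (Ioc a b)) :=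
  hF.memLp_comp hsub hq.continuousOn hq.mapsTo

lemma dist_picard_picard_le {L : ℝ≥0} {D : ℝ} (hα : ∀ i, 0 < α i) (haT : a ≤ T) (hTt : T ≤ t)
    (hq : MemLp (fun τ => F (q τ) τ) ∞ (volume.restrict (Ioc a t)))
    (hp : MemLp (fun τ => F (p τ) τ) ∞ (volume.restrict (Ioc a t)))
    (hqp : EqOn q p (Ioc a T))
    (hlip : ∀ᵐ τ ∂volume.restrict (Ioc T t), LipschitzOnWith L (F · τ) B)
    (hqB : MapsTo q (Ioc T t) B) (hpB : MapsTo p (Ioc T t) B)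
    (hD : ∀ τ ∈ Ioc T t, dist (q τ) (p τ) ≤ D) :
    dist (picard a α qa F q t) (picard a α qa F p t) ≤ L * D * rlMass α (t - T) := by
  rw [picard, picard, dist_add_left, dist_eq_norm, ← rlIntVec_sub hα (haT.trans hTt) hq hp]
  refine norm_rlIntVec_le_of_ae_eq_zero hα haT hTt ?_ ?_
  · refine ae_restrict_of_forall_mem measurableSet_Ioc fun τ hτ => ?_
    rw [Pi.sub_apply, hqp hτ, sub_self]
  · filter_upwards [hlip, ae_restrict_mem measurableSet_Ioc] with τ hlipτ hτ
    rw [Pi.sub_apply, ← dist_eq_norm]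
    exact (hlipτ.dist_le_mul _ (hqB hτ) _ (hpB hτ)).trans
      (mul_le_mul_of_nonneg_left (hD τ hτ) L.2)

lemma dist_picard_le {M : ℝ} (hα : ∀ i, 0 < α i) (hat : a ≤ t) (hqB : MapsTo q (Ioc a t) B)
    (hM : ∀ᵐ τ ∂volume.restrict (Ioc a t), ∀ x ∈ B, ‖F x τ‖ ≤ M) :
    dist (picard a α qa F q t) qa ≤ M * rlMass α (t - a) := by
  rw [picard, dist_eq_norm, add_sub_cancel_left]
  refine norm_rlIntVec_le_of_ae_eq_zero hα le_rfl hat (by simp) ?_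
  filter_upwards [hM, ae_restrict_mem measurableSet_Ioc] with τ hMτ hτ using hMτ _ (hqB hτ)

end VolterraEquation

section Uniqueness

variable {ι : Type*} [Fintype ι] {a b T : ℝ} {If : Set ℝ} {Ω B : Set (EuclideanSpace ℝ ι)}
  {α : ι → ℝ} {qa : EuclideanSpace ℝ ι} {F : EuclideanSpace ℝ ι → ℝ → EuclideanSpace ℝ ι}
  {q p : ℝ → EuclideanSpace ℝ ι}

lemma IsVolterraSol.eqOn_of_mul_rlMass_lt_one {L : ℝ≥0} (hα : ∀ i, 0 < α i)
    (hF : IsAdmissibleField If Ω F) (hsub : Icc a b ⊆ If) (hq : IsVolterraSol a Ω α qa F q b)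
    (hp : IsVolterraSol a Ω α qa F p b) (haT : a ≤ T) (hTb : T ≤ b) (hqp : EqOn q p (Icc a T))
    (hlip : ∀ᵐ τ ∂volume.restrict (Ioc T b), LipschitzOnWith L (F · τ) B)
    (hqB : MapsTo q (Icc T b) B) (hpB : MapsTo p (Icc T b) B)
    (hL : L * rlMass α (b - T) < 1) : EqOn q p (Icc a b) := by
  have hTab : Icc T b ⊆ Icc a b := Icc_subset_Icc_left haT
  have hdist : ContinuousOn (fun t => dist (q t) (p t)) (Icc T b) :=
    continuous_dist.comp_continuousOn
      ((hq.continuousOn.mono hTab).prodMk (hp.continuousOn.mono hTab))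
  obtain ⟨s, hs, hmax⟩ := isCompact_Icc.exists_isMaxOn (nonempty_Icc.2 hTb) hdist
  have hsub_s : Icc a s ⊆ If := (Icc_subset_Icc_right hs.2).trans hsub
  have hTs : Ioc T s ⊆ Icc T b := Ioc_subset_Icc_self.trans (Icc_subset_Icc_right hs.2)
  have hestimate : dist (q s) (p s) ≤ L * dist (q s) (p s) * rlMass α (s - T) := by
    nth_rw 1 [hq.eqOn_picard (hTab hs), hp.eqOn_picard (hTab hs)]
    exact dist_picard_picard_le hα haT hs.1 ((hq.mono hs.2).memLp hF hsub_s)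
      ((hp.mono hs.2).memLp hF hsub_s) (hqp.mono Ioc_subset_Icc_self)
      (ae_restrict_of_ae_restrict_of_subset (Ioc_subset_Ioc_right hs.2) hlip)
      (hqB.mono_left hTs) (hpB.mono_left hTs) fun τ hτ => hmax (hTs hτ)
  have hsmall : L * rlMass α (s - T) < 1 :=
    (mul_le_mul_of_nonneg_left (rlMass_le_rlMass hα (sub_nonneg.2 hs.1)
      (sub_le_sub_right hs.2 T)) L.2).trans_lt hL
  have hzero : dist (q s) (p s) ≤ 0 := by nlinarith [dist_nonneg (x := q s) (y := p s)]
  intro t ht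
  rcases le_total t T with htT | hTt
  · exact hqp ⟨ht.1, htT⟩
  · exact dist_le_zero.1 ((hmax ⟨hTt, ht.2⟩).trans hzero)

lemma eventually_nhdsGT_mapsTo_Icc {X : Type*} [TopologicalSpace X] {u : ℝ → X} {U : Set X}
    (hu : ContinuousOn u (Icc a b)) (hT : T ∈ Ico a b) (hU : U ∈ 𝓝 (u T)) :
    ∀ᶠ z in 𝓝[>] T, MapsTo u (Icc T z) U := by
  have hright : ContinuousWithinAt u (Ici T) T :=
    (hu T (Ico_subset_Icc_self hT)).mono_of_mem_nhdsWithin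
      (mem_of_superset (Icc_mem_nhdsGE hT.2) (Icc_subset_Icc_left hT.1))
  obtain ⟨z, hTz, hz⟩ := mem_nhdsGE_iff_exists_Icc_subset.1 (hright hU)
  filter_upwards [Ioc_mem_nhdsGT hTz] with w hw τ hτ using hz ⟨hτ.1, hτ.2.trans hw.2⟩

lemma IsVolterraSol.exists_gt_eqOn (hα : ∀ i, 0 < α i) (hF : IsAdmissibleField If Ω F)
    (hsub : Icc a b ⊆ If) (hq : IsVolterraSol a Ω α qa F q b)
    (hp : IsVolterraSol a Ω α qa F p b) (hT : T ∈ Ico a b) (hqp : EqOn q p (Icc a T)) :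
    ∃ z > T, EqOn q p (Icc a z) := by
  have hTab : T ∈ Icc a b := Ico_subset_Icc_self hT
  obtain ⟨R, hR, δ, hδ, L, -, hlip⟩ := hF.exists_ae_lipschitzOnWith (hq.mapsTo hTab) (hsub hTab)
  have hball_q : Metric.closedBall (q T) R ∈ 𝓝 (q T) := Metric.closedBall_mem_nhds _ hR
  have hball_p : Metric.closedBall (q T) R ∈ 𝓝 (p T) := by
    rwa [← hqp (right_mem_Icc.2 hT.1)]
  have hsmall : ∀ᶠ z in 𝓝[>] T, L * rlMass α (z - T) < 1 :=
    ((tendsto_const_mul_rlMass_sub hα L T).mono_left nhdsWithin_le_nhds).eventually_lt_const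
      one_pos
  have hclose : ∀ᶠ z in 𝓝[>] T, z ∈ Ioc T (min b (T + δ)) :=
    Ioc_mem_nhdsGT (lt_min hT.2 (lt_add_of_pos_right T hδ))
  obtain ⟨z, ⟨hqz, hpz⟩, hLz, hz⟩ := (((eventually_nhdsGT_mapsTo_Icc hq.continuousOn hT hball_q).and
    (eventually_nhdsGT_mapsTo_Icc hp.continuousOn hT hball_p)).and
    (hsmall.and hclose)).exists
  obtain ⟨hzb, hzδ⟩ := le_min_iff.1 hz.2
  have hsub_z : Icc a z ⊆ If := (Icc_subset_Icc_right hzb).trans hsub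
  have hIoc : Ioc T z ⊆ Icc (T - δ) (T + δ) ∩ If := fun τ hτ =>
    ⟨⟨by linarith [hτ.1], hτ.2.trans hzδ⟩, hsub_z ⟨hT.1.trans hτ.1.le, hτ.2⟩⟩
  exact ⟨z, hz.1, (hq.mono hzb).eqOn_of_mul_rlMass_lt_one hα hF hsub_z (hp.mono hzb) hT.1
    hz.1.le hqp (ae_restrict_of_ae_restrict_of_subset hIoc hlip) hqz hpz hLz⟩

lemma IsVolterraSol.eqOn (hα : ∀ i, 0 < α i) (hF : IsAdmissibleField If Ω F)
    (hsub : Icc a b ⊆ If) (hq : IsVolterraSol a Ω α qa F q b)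
    (hp : IsVolterraSol a Ω α qa F p b) : EqOn q p (Icc a b) := by
  rcases lt_or_ge b a with hba | hab
  · simp [Icc_eq_empty hba.not_ge]
  · refine eqOn_Icc_of_forall_exists_gt hq.continuousOn hp.continuousOn ?_ fun T hT hqp =>
      hq.exists_gt_eqOn hα hF hsub hp hT hqp
    rw [hq.apply_left hα hab, hp.apply_left hα hab]

end Uniqueness

section LocalExistence

variable {ι : Type*} [Fintype ι] {a b t : ℝ} {If : Set ℝ} {Ω B : Set (EuclideanSpace ℝ ι)}
  {α : ι → ℝ} {qa : EuclideanSpace ℝ ι} {F : EuclideanSpace ℝ ι → ℝ → EuclideanSpace ℝ ι}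
  {q p : ℝ → EuclideanSpace ℝ ι}

lemma mapsTo_picard_closedBall {M R : ℝ} (hα : ∀ i, 0 < α i) (hM : 0 ≤ M)
    (hqB : MapsTo q (Icc a b) B)
    (hbound : ∀ᵐ τ ∂volume.restrict (Icc a b), ∀ x ∈ B, ‖F x τ‖ ≤ M)
    (hMR : M * rlMass α (b - a) ≤ R) :
    MapsTo (picard a α qa F q) (Icc a b) (Metric.closedBall qa R) := by
  intro t ht
  have hsub : Ioc a t ⊆ Icc a b := Ioc_subset_Icc_self.trans (Icc_subset_Icc_right ht.2)
  calc dist (picard a α qa F q t) qa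
      ≤ M * rlMass α (t - a) := dist_picard_le hα ht.1 (hqB.mono_left hsub)
        (ae_restrict_of_ae_restrict_of_subset hsub hbound)
    _ ≤ M * rlMass α (b - a) := mul_le_mul_of_nonneg_left
        (rlMass_le_rlMass hα (sub_nonneg.2 ht.1) (sub_le_sub_right ht.2 a)) hM
    _ ≤ R := hMR

lemma dist_picard_picard_le_of_mem_Icc {L : ℝ≥0} {D : ℝ} (hα : ∀ i, 0 < α i)
    (hq : MemLp (fun τ => F (q τ) τ) ∞ (volume.restrict (Ioc a b)))
    (hp : MemLp (fun τ => F (p τ) τ) ∞ (volume.restrict (Ioc a b)))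
    (hlip : ∀ᵐ τ ∂volume.restrict (Icc a b), LipschitzOnWith L (F · τ) B)
    (hqB : MapsTo q (Icc a b) B) (hpB : MapsTo p (Icc a b) B)
    (hD : ∀ τ ∈ Icc a b, dist (q τ) (p τ) ≤ D) (ht : t ∈ Icc a b) :
    dist (picard a α qa F q t) (picard a α qa F p t) ≤ L * D * rlMass α (b - a) := by
  have hD₀ : 0 ≤ D := dist_nonneg.trans (hD t ht)
  have hsub : Ioc a t ⊆ Icc a b := Ioc_subset_Icc_self.trans (Icc_subset_Icc_right ht.2)
  have hrestrict : volume.restrict (Ioc a t) ≤ volume.restrict (Ioc a b) :=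
    Measure.restrict_mono (Ioc_subset_Ioc_right ht.2) le_rfl
  calc dist (picard a α qa F q t) (picard a α qa F p t)
      ≤ L * D * rlMass α (t - a) :=
        dist_picard_picard_le hα le_rfl ht.1 (hq.mono_measure hrestrict)
          (hp.mono_measure hrestrict) (by simp)
          (ae_restrict_of_ae_restrict_of_subset hsub hlip) (hqB.mono_left hsub)
          (hpB.mono_left hsub) fun τ hτ => hD τ (hsub hτ)
    _ ≤ L * D * rlMass α (b - a) := mul_le_mul_of_nonneg_left
        (rlMass_le_rlMass hα (sub_nonneg.2 ht.1) (sub_le_sub_right ht.2 a)) (by positivity)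

lemma exists_isVolterraSol_of_mul_rlMass_lt_one {L : ℝ≥0} {M R : ℝ} (hα : ∀ i, 0 < α i)
    (hα1 : ∀ i, α i ≤ 1) (hF : IsAdmissibleField If Ω F) (hab : a ≤ b) (hsub : Icc a b ⊆ If)
    (hRΩ : Metric.closedBall qa R ⊆ Ω) (hM : 0 ≤ M)
    (hbound : ∀ᵐ τ ∂volume.restrict (Icc a b), ∀ x ∈ Metric.closedBall qa R, ‖F x τ‖ ≤ M)
    (hlip : ∀ᵐ τ ∂volume.restrict (Icc a b), LipschitzOnWith L (F · τ) (Metric.closedBall qa R))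
    (hMR : M * rlMass α (b - a) ≤ R) (hL : L * rlMass α (b - a) < 1) :
    ∃ q, IsVolterraSol a Ω α qa F q b := by
  have hmass : 0 ≤ rlMass α (b - a) := rlMass_nonneg hα (sub_nonneg.2 hab)
  have hR : 0 ≤ R := (mul_nonneg hM hmass).trans hMR
  have hc : L * (rlMass α (b - a)).toNNReal < 1 := by
    rwa [← NNReal.coe_lt_coe, NNReal.coe_mul, Real.coe_toNNReal _ hmass]
  have memLp {q : ℝ → EuclideanSpace ℝ ι} (hq : ContinuousOn q (Icc a b))
      (hqR : MapsTo q (Icc a b) (Metric.closedBall qa R)) :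
      MemLp (fun τ => F (q τ) τ) ∞ (volume.restrict (Ioc a b)) :=
    hF.memLp_comp hsub hq (hqR.mono_right hRΩ)
  obtain ⟨q, hq, hqR, hfix⟩ : ∃ q, ContinuousOn q (Icc a b) ∧
      MapsTo q (Icc a b) (Metric.closedBall qa R) ∧ EqOn q (picard a α qa F q) (Icc a b) := by
    refine exists_eqOn_fixedPoint_of_isCompact isCompact_Icc Metric.isClosed_closedBall
      (Metric.nonempty_closedBall.2 hR) hc
      (fun q hq hqR => continuousOn_const.add (continuousOn_rlIntVec hα hα1 (memLp hq hqR)))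
      (fun q _ hqR => mapsTo_picard_closedBall hα hM hqR hbound hMR)
      (fun q p hq hqR hp hpR D hD t ht => ?_)
    rw [NNReal.coe_mul, Real.coe_toNNReal _ hmass, mul_right_comm]
    exact dist_picard_picard_le_of_mem_Icc hα (memLp hq hqR) (memLp hp hpR) hlip hqR hpR hD ht
  exact ⟨q, hq, hqR.mono_right hRΩ, hfix⟩

lemma IsAdmissibleField.exists_isVolterraSol (hα : ∀ i, 0 < α i) (hα1 : ∀ i, α i ≤ 1)
    (hF : IsAdmissibleField If Ω F) (hIf : IsIntervalFrom a If) (hqa : qa ∈ Ω) :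
    ∃ b ∈ If, a < b ∧ ∃ q, IsVolterraSol a Ω α qa F q b := by
  obtain ⟨R, hR, δ, hδ, L, hRΩ, hlip⟩ := hF.exists_ae_lipschitzOnWith hqa hIf.1
  obtain ⟨c, hc, hac⟩ := hIf.exists_gt
  obtain ⟨M, hM, hbound⟩ := hF.exists_ae_forall_norm_le (isCompact_closedBall qa R) hRΩ hac.le
    (hIf.Icc_subset hc)
  have hsmall : ∀ (C : ℝ) {ε : ℝ}, 0 < ε → ∀ᶠ b in 𝓝[>] a, C * rlMass α (b - a) < ε := fun C _ hε =>
    ((tendsto_const_mul_rlMass_sub hα C a).mono_left nhdsWithin_le_nhds).eventually_lt_const hε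
  have hclose : ∀ᶠ b in 𝓝[>] a, b ∈ Ioc a (min c (a + δ)) :=
    Ioc_mem_nhdsGT (lt_min hac (lt_add_of_pos_right a hδ))
  obtain ⟨b, ⟨hMb, hLb⟩, hb⟩ :=
    (((hsmall M hR).and (hsmall L one_pos)).and hclose).exists
  obtain ⟨hbc, hbδ⟩ := le_min_iff.1 hb.2
  have hbIf : b ∈ If := hIf.Icc_subset hc ⟨hb.1.le, hbc⟩
  have hIcc : Icc a b ⊆ Icc (a - δ) (a + δ) ∩ If := fun τ hτ =>
    ⟨⟨by linarith [hτ.1], hτ.2.trans hbδ⟩, hIf.Icc_subset hbIf hτ⟩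
  exact ⟨b, hbIf, hb.1, exists_isVolterraSol_of_mul_rlMass_lt_one hα hα1 hF hb.1.le
    (hIf.Icc_subset hbIf) hRΩ hM
    (ae_restrict_of_ae_restrict_of_subset (Icc_subset_Icc_right hbc) hbound)
    (ae_restrict_of_ae_restrict_of_subset hIcc hlip) hMb.le hLb⟩

end LocalExistence

section CaputoVolterra

variable {m : ℕ} {a : ℝ} {If I : Set ℝ} {Ω : Set (EuclideanSpace ℝ (Fin m))} {α : Fin m → ℝ}
  {qa : EuclideanSpace ℝ (Fin m)} {F : EuclideanSpace ℝ (Fin m) → ℝ → EuclideanSpace ℝ (Fin m)}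
  {q : ℝ → EuclideanSpace ℝ (Fin m)}

lemma IsCaputoLocalSol.isVolterraSol_of_lt (hα : ∀ i, 0 < α i) (hα1 : ∀ i, α i ≤ 1)
    (hF : IsAdmissibleField If Ω F) (hq : IsCaputoLocalSol a If Ω α qa F q I) {b : ℝ}
    (hb : b ∈ I) (hab : a < b) : IsVolterraSol a Ω α qa F q b := by
  obtain ⟨hI, hIIf, hcont, hΩ, hqa, hderiv⟩ := hq
  have hsub : Icc a b ⊆ I := hI.Icc_subset hb
  have hcont_b : ContinuousOn q (Icc a b) := hcont.mono hsub
  have hmaps : MapsTo q (Icc a b) Ω := fun t ht => hΩ t (hsub ht)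
  refine ⟨hcont_b, hmaps, fun t ht => ?_⟩
  ext i
  obtain ⟨c, h, -, hint, hh⟩ := hderiv i
  have hh_b : (fun τ => F (q τ) τ i) =ᵐ[volume.restrict (Ioc a b)] h := by
    filter_upwards [ae_restrict_of_ae_restrict_of_subset (Ioc_subset_Icc_self.trans hsub) hh]
      with τ hτ using hτ.symm
  have hmemLp : MemLp h ∞ (volume.restrict (Ioc a b)) :=
    (memLp_congr_ae hh_b).1 ((hF.memLp_comp (hsub.trans hIIf) hcont_b hmaps).eval_piLp i)
  have hcont_i : ContinuousOn (fun τ => q τ i - qa i) (Icc a b) := by fun_prop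
  have hq_i : q t i - qa i = rlInt a (α i) h t :=
    eqOn_rlInt_of_rlInt_one_sub_eq (hα i) (hα1 i) hab hcont_i (by rw [hqa, sub_self]) hmemLp
      (ae_restrict_of_ae_restrict_of_subset hsub hint) ht
  calc q t i = qa i + rlInt a (α i) h t := by rw [← hq_i, add_sub_cancel]
    _ = qa i + rlInt a (α i) (fun τ => F (q τ) τ i) t := by
      rw [rlInt_congr_ae (hα i) ht.1
        (ae_restrict_of_ae_restrict_of_subset (Ioc_subset_Ioc_right ht.2) hh_b)]

lemma IsCaputoLocalSol.isVolterraSol (hα : ∀ i, 0 < α i) (hα1 : ∀ i, α i ≤ 1)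
    (hF : IsAdmissibleField If Ω F) (hq : IsCaputoLocalSol a If Ω α qa F q I) {b : ℝ}
    (hb : b ∈ I) : IsVolterraSol a Ω α qa F q b := by
  have hab : a ≤ b := hq.1.2.1 hb
  rcases hab.eq_or_lt with rfl | hab
  · obtain ⟨c, hc, hac⟩ := hq.1.exists_gt
    exact (hq.isVolterraSol_of_lt hα hα1 hF hc hac).mono hac.le
  · exact hq.isVolterraSol_of_lt hα hα1 hF hb hab

lemma isCaputoLocalSol_of_isVolterraSol (hα : ∀ i, 0 < α i) (hα1 : ∀ i, α i ≤ 1)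
    (hF : IsAdmissibleField If Ω F) (hI : IsIntervalFrom a I) (hIIf : I ⊆ If)
    (hq : ∀ b ∈ I, IsVolterraSol a Ω α qa F q b) : IsCaputoLocalSol a If Ω α qa F q I := by
  refine ⟨hI, hIIf, hI.continuousOn fun b hb => (hq b hb).continuousOn,
    fun t ht => (hq t ht).mapsTo (right_mem_Icc.2 (hI.2.1 ht)),
    (hq a hI.1).apply_left hα le_rfl, fun i => ⟨0, fun t => F (q t) t i, fun b hb => ?_, ?_,
      .of_forall fun _ => rfl⟩⟩
  · rw [integrableOn_Icc_iff_integrableOn_Ioc]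
    exact (((hq b hb).memLp hF ((hI.Icc_subset hb).trans hIIf)).eval_piLp i).integrable le_top
  · refine ae_restrict_of_forall_mem hI.2.2.2.measurableSet fun t ht => ?_
    rw [zero_add]
    refine rlInt_one_sub_eq_integral (hα i).le (hα1 i) (hI.2.1 ht)
      (((hq t ht).memLp hF ((hI.Icc_subset ht).trans hIIf)).eval_piLp i) fun s hs => ?_
    change q s i - qa i = _
    rw [(hq t ht).eqOn_picard hs]
    exact add_sub_cancel_left (qa i) _

end CaputoVolterra

section MaximalSolution

variable {m : ℕ} {a : ℝ} {If I : Set ℝ} {Ω : Set (EuclideanSpace ℝ (Fin m))} {α : Fin m → ℝ}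
  {qa : EuclideanSpace ℝ (Fin m)} {F : EuclideanSpace ℝ (Fin m) → ℝ → EuclideanSpace ℝ (Fin m)}
  {q p : ℝ → EuclideanSpace ℝ (Fin m)}

/-- A local solution is dominating if it extends every local solution. -/
def IsDominatingSol (a : ℝ) (If : Set ℝ) (Ω : Set (EuclideanSpace ℝ (Fin m))) (α : Fin m → ℝ)
    (qa : EuclideanSpace ℝ (Fin m))
    (F : EuclideanSpace ℝ (Fin m) → ℝ → EuclideanSpace ℝ (Fin m))
    (q : ℝ → EuclideanSpace ℝ (Fin m)) (I : Set ℝ) : Prop :=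
  IsCaputoLocalSol a If Ω α qa F q I ∧
    ∀ p J, IsCaputoLocalSol a If Ω α qa F p J → J ⊆ I ∧ EqOn q p J

lemma IsDominatingSol.isMaximalSol (hq : IsDominatingSol a If Ω α qa F q I) :
    IsMaximalSol a If Ω α qa F q I :=
  ⟨hq.1, fun p J hp hIJ _ => (hq.2 p J hp).1.antisymm hIJ⟩

lemma IsDominatingSol.eq_of_isMaximalSol {J : Set ℝ} (hq : IsDominatingSol a If Ω α qa F q I)
    (hp : IsMaximalSol a If Ω α qa F p J) : J = I ∧ EqOn p q I := by
  obtain ⟨hJI, hqp⟩ := hq.2 p J hp.1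
  obtain rfl : I = J := hp.2 q I hq.1 hJI hqp
  exact ⟨rfl, hqp.symm⟩

/-- The set of times up to which the Volterra equation has a solution. -/
def lifespan {ι : Type*} (a : ℝ) (If : Set ℝ) (Ω : Set (EuclideanSpace ℝ ι)) (α : ι → ℝ)
    (qa : EuclideanSpace ℝ ι) (F : EuclideanSpace ℝ ι → ℝ → EuclideanSpace ℝ ι) : Set ℝ :=
  {b ∈ If | ∃ q, IsVolterraSol a Ω α qa F q b}

/-- The union of all solutions of the Volterra equation: its value at `t` is that of any solution
on `[a, t]`, and it is arbitrary where there is no such solution. -/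
noncomputable def maximalSol {ι : Type*} (a : ℝ) (Ω : Set (EuclideanSpace ℝ ι)) (α : ι → ℝ)
    (qa : EuclideanSpace ℝ ι) (F : EuclideanSpace ℝ ι → ℝ → EuclideanSpace ℝ ι) (t : ℝ) :
    EuclideanSpace ℝ ι :=
  Classical.epsilon (IsVolterraSol a Ω α qa F · t) t

lemma IsVolterraSol.eqOn_maximalSol (hα : ∀ i, 0 < α i) (hF : IsAdmissibleField If Ω F) {b : ℝ}
    (hsub : Icc a b ⊆ If) (hq : IsVolterraSol a Ω α qa F q b) :
    EqOn q (maximalSol a Ω α qa F) (Icc a b) := by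
  intro t ht
  have hqt : IsVolterraSol a Ω α qa F q t := hq.mono ht.2
  have hspec := Classical.epsilon_spec (p := (IsVolterraSol a Ω α qa F · t)) ⟨q, hqt⟩
  exact hqt.eqOn hα hF ((Icc_subset_Icc_right ht.2).trans hsub) hspec (right_mem_Icc.2 ht.1)

lemma isVolterraSol_maximalSol (hα : ∀ i, 0 < α i) (hF : IsAdmissibleField If Ω F)
    (hIf : IsIntervalFrom a If) {b : ℝ} (hb : b ∈ lifespan a If Ω α qa F) :
    IsVolterraSol a Ω α qa F (maximalSol a Ω α qa F) b := by
  obtain ⟨hbIf, q, hq⟩ := hb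
  exact hq.congr hα (hq.eqOn_maximalSol hα hF (hIf.Icc_subset hbIf))

lemma Icc_subset_lifespan (hIf : IsIntervalFrom a If) {b : ℝ}
    (hb : b ∈ lifespan a If Ω α qa F) : Icc a b ⊆ lifespan a If Ω α qa F := by
  obtain ⟨hbIf, q, hq⟩ := hb
  exact fun t ht => ⟨hIf.Icc_subset hbIf ht, q, hq.mono ht.2⟩

lemma isIntervalFrom_lifespan (hα : ∀ i, 0 < α i) (hα1 : ∀ i, α i ≤ 1)
    (hF : IsAdmissibleField If Ω F) (hIf : IsIntervalFrom a If) (hqa : qa ∈ Ω) :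
    IsIntervalFrom a (lifespan a If Ω α qa F) := by
  obtain ⟨b, hbIf, hab, hb⟩ := hF.exists_isVolterraSol hα hα1 hIf hqa
  have hsub : Icc a b ⊆ lifespan a If Ω α qa F := Icc_subset_lifespan hIf ⟨hbIf, hb⟩
  refine ⟨hsub (left_mem_Icc.2 hab.le), fun t ht => hIf.2.1 ht.1, ?_, ⟨?_⟩⟩
  · exact (nonempty_Ioo.2 hab).mono (interior_maximal (Ioo_subset_Icc_self.trans hsub) isOpen_Ioo)
  · exact fun x hx y hy t ht =>
      Icc_subset_lifespan hIf hy ⟨le_trans (hIf.2.1 hx.1) ht.1, ht.2⟩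

theorem isDominatingSol_maximalSol (hα : ∀ i, 0 < α i) (hα1 : ∀ i, α i ≤ 1)
    (hF : IsAdmissibleField If Ω F) (hIf : IsIntervalFrom a If) (hqa : qa ∈ Ω) :
    IsDominatingSol a If Ω α qa F (maximalSol a Ω α qa F) (lifespan a If Ω α qa F) := by
  refine ⟨isCaputoLocalSol_of_isVolterraSol hα hα1 hF
    (isIntervalFrom_lifespan hα hα1 hF hIf hqa) (fun t ht => ht.1)
    fun b hb => isVolterraSol_maximalSol hα hF hIf hb, fun p J hp => ?_⟩
  have hpJ : ∀ t ∈ J, IsVolterraSol a Ω α qa F p t := fun t ht => hp.isVolterraSol hα hα1 hF ht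
  refine ⟨fun t ht => ⟨hp.2.1 ht, p, hpJ t ht⟩, fun t ht => ?_⟩
  exact ((hpJ t ht).eqOn_maximalSol hα hF (hIf.Icc_subset (hp.2.1 ht))
    (right_mem_Icc.2 (hp.1.2.1 ht))).symm

end MaximalSolution

theorem statement7 (a : ℝ) (If : Set ℝ)
    (haI : a ∈ If) (hIsub : If ⊆ Set.Ici a) (hIint : (interior If).Nonempty)
    (hIord : If.OrdConnected)
    (m : ℕ) (hm : 0 < m) (Ω : Set (EuclideanSpace ℝ (Fin m)))
    (hΩopen : IsOpen Ω) (hΩne : Ω.Nonempty)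
    (α : Fin m → ℝ) (hα : ∀ i, 0 < α i ∧ α i ≤ 1)
    (qa : EuclideanSpace ℝ (Fin m)) (hqa : qa ∈ Ω)
    (F : EuclideanSpace ℝ (Fin m) → ℝ → EuclideanSpace ℝ (Fin m))
    -- Carathéodory assumptions
    (hFmeas : ∀ x ∈ Ω, MeasureTheory.AEStronglyMeasurable (fun t => F x t)
      (MeasureTheory.volume.restrict If))
    (hFcont : ∀ᵐ t ∂(MeasureTheory.volume.restrict If), ContinuousOn (fun x => F x t) Ω)
    -- `F` is bounded on compacts
    (hbdd : ∀ K : Set (EuclideanSpace ℝ (Fin m)), K ⊆ Ω → IsCompact K →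
      ∀ c ∈ If, ∀ d ∈ If, c ≤ d → ∃ M : ℝ, 0 ≤ M ∧ ∀ x ∈ K,
        ∀ᵐ t ∂(MeasureTheory.volume.restrict (Set.Icc c d)), ‖F x t‖ ≤ M)
    -- `F` is locally Lipschitz continuous in its first variable
    (hlip : ∀ x ∈ Ω, ∀ t ∈ If, ∃ R > (0:ℝ), ∃ δ > (0:ℝ), ∃ L : ℝ, 0 ≤ L ∧
      Metric.closedBall x R ⊆ Ω ∧
      ∀ x₁ ∈ Metric.closedBall x R, ∀ x₂ ∈ Metric.closedBall x R,
        ∀ᵐ τ ∂(MeasureTheory.volume.restrict (Set.Icc (t - δ) (t + δ) ∩ If)),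
          ‖F x₂ τ - F x₁ τ‖ ≤ L * ‖x₂ - x₁‖) :
    ∃ (q : ℝ → EuclideanSpace ℝ (Fin m)) (I : Set ℝ),
      IsMaximalSol a If Ω α qa F q I ∧
      (∀ (q' : ℝ → EuclideanSpace ℝ (Fin m)) (I' : Set ℝ),
        IsCaputoLocalSol a If Ω α qa F q' I' → I' ⊆ I ∧ Set.EqOn q q' I') ∧
      ∀ (q₂ : ℝ → EuclideanSpace ℝ (Fin m)) (I₂ : Set ℝ),
        IsMaximalSol a If Ω α qa F q₂ I₂ → I₂ = I ∧ Set.EqOn q₂ q I := by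
  have hF : IsAdmissibleField If Ω F := ⟨hFmeas, hFcont, hbdd, hlip⟩
  have hdom : IsDominatingSol a If Ω α qa F (maximalSol a Ω α qa F) (lifespan a If Ω α qa F) :=
    isDominatingSol_maximalSol (fun i => (hα i).1) (fun i => (hα i).2) hF
      ⟨haI, hIsub, hIint, hIord⟩ hqa
  exact ⟨_, _, hdom.isMaximalSol, hdom.2, fun _ _ hp => hdom.eq_of_isMaximalSol hp⟩
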